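/- Let T : M₀ → M₀ be any mapping on the set of all probability distributions on ℝ. Then T commutes with the probability distortion T_d for every right-continuous distortion function d with d(0+)=0 and d(1−)=1 (i.e., every d ∈ F_D^R ∩ F̂_D) if and only if there exists an increasing left-continuous u : ℝ → ℝ such that T = T^u. -/

import Mathlib

/-!
For right-continuous `d` and a cdf `F`, the distortion `T_d F` is just `d ∘ F`.

If `T = T^u` with `u` increasing and left-continuous, then each sublevel set `{u ≤ x}` is `∅`,
`ℝ` or a closed half-line `(-∞, a]`, so `T^u F x` is `0`, `1` or `F a`; applying `d` to the
values of `F` therefore commutes with `T^u`.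

Conversely, the threshold distortion `d = 1_{[p, 1]}` with `0 < p < 1` turns `F` into the point mass
at the left `p`-quantile of `F`. Let `u c` be the left median of `T δ_c`. Commutation with the threshold
distortions says that the left `p`-quantile of `T F` is `u` of the left `p`-quantile of `F`
(`le_map_iff`). Applying this to one strictly increasing continuous cdf, the logistic one, shows
that `u` is increasing and left-continuous, and for general `F` it identifies `T F` with `T^u F`,
because a cdf is determined by its left quantiles.
-/

open MeasureTheory Filter Topology Set

noncomputable section

/-- The set of cdfs of compactly supported probability distributions on ℝ:
increasing, right-continuous, equal to `0` for all sufficiently small `x` and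
equal to `1` for all sufficiently large `x`. -/
def mSet : Set (ℝ → ℝ) :=
  {F | Monotone F ∧ (∀ x, ContinuousWithinAt F (Set.Ici x) x) ∧
    (∃ a, ∀ x ≤ a, F x = 0) ∧ (∃ b, ∀ x, b ≤ x → F x = 1)}

/-- The set of cdfs of all probability distributions on ℝ: increasing,
right-continuous, with limit `0` at `-∞` and limit `1` at `+∞`. -/
def m0Set : Set (ℝ → ℝ) :=
  {F | Monotone F ∧ (∀ x, ContinuousWithinAt F (Set.Ici x) x) ∧
    Tendsto F atBot (𝓝 0) ∧ Tendsto F atTop (𝓝 1)}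

/-- A utility function: increasing (non-strict) and continuous. -/
def IsUF (u : ℝ → ℝ) : Prop := Monotone u ∧ Continuous u

/-- An increasing and left-continuous function on ℝ. -/
def IsLeftCtsIncr (u : ℝ → ℝ) : Prop :=
  Monotone u ∧ ∀ x, ContinuousWithinAt u (Set.Iic x) x

/-- A distortion function: an increasing function `d : [0,1] → [0,1]` with
`d 0 = 0` and `d 1 = 1` (values outside `[0,1]` are irrelevant). -/
def IsDF (d : ℝ → ℝ) : Prop :=
  MonotoneOn d (Set.Icc 0 1) ∧ d 0 = 0 ∧ d 1 = 1

/-- Right-continuity of a distortion function on `[0,1)`. -/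
def DFRightCts (d : ℝ → ℝ) : Prop :=
  ∀ x ∈ Set.Ico (0:ℝ) 1, ContinuousWithinAt d (Set.Ioi x) x

/-- A distortion function with moreover `d(0+) = 0` and `d(1-) = 1`. -/
def IsDFhat (d : ℝ → ℝ) : Prop :=
  IsDF d ∧ Tendsto d (𝓝[>] (0:ℝ)) (𝓝 0) ∧ Tendsto d (𝓝[<] (1:ℝ)) (𝓝 1)

/-- The probability distortion generated by `d`:  `T_d F x = (d ∘ F)(x+)`,
the right limit of `d ∘ F` at `x`. -/
noncomputable def distortT (d F : ℝ → ℝ) : ℝ → ℝ :=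
  fun x => Function.rightLim (d ∘ F) x

/-- The utility transform `T^u`: it maps a cdf `F` to the cdf of the
pushforward under `u` of the probability measure with cdf `F`. -/
noncomputable def utilityT (u F : ℝ → ℝ) : ℝ → ℝ := by
  classical
  exact
    if h : Monotone F ∧ ∀ x, ContinuousWithinAt F (Set.Ici x) x then
      fun x => ((StieltjesFunction.measure ⟨F, h.1, h.2⟩).map u (Set.Iic x)).toReal
    else F

/-- Left quantile `F_L^{-1}(p) = inf {x | F x ≥ p}`. -/
noncomputable def leftQ (F : ℝ → ℝ) (p : ℝ) : ℝ := sInf {x | p ≤ F x}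

/-- Right quantile `F_R^{-1}(p) = inf {x | F x > p}`. -/
noncomputable def rightQ (F : ℝ → ℝ) (p : ℝ) : ℝ := sInf {x | p < F x}

lemma m0Set_nonneg {F : ℝ → ℝ} (hF : F ∈ m0Set) (x : ℝ) : 0 ≤ F x :=
  hF.1.le_of_tendsto hF.2.2.1 x

lemma m0Set_le_one {F : ℝ → ℝ} (hF : F ∈ m0Set) (x : ℝ) : F x ≤ 1 :=
  hF.1.ge_of_tendsto hF.2.2.2 x

lemma continuousWithinAt_distort {d F : ℝ → ℝ} (hd : DFRightCts d) (hF : F ∈ m0Set) (x : ℝ) :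
    ContinuousWithinAt (d ∘ F) (Ici x) x := by
  rcases (m0Set_le_one hF x).lt_or_eq with h | h
  · have hc : ContinuousWithinAt d (Ici (F x)) (F x) :=
      continuousWithinAt_Ioi_iff_Ici.1 (hd (F x) ⟨m0Set_nonneg hF x, h⟩)
    exact hc.comp (hF.2.1 x) fun y hy => hF.1 hy
  · -- Right-continuity of `d` at `1` is not available, but `F` stays equal to `1` beyond `x`.
    have hcst : ∀ y ∈ Ici x, (d ∘ F) y = d 1 := fun y hy => by
      have : F y = 1 := le_antisymm (m0Set_le_one hF y) (h ▸ hF.1 hy)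
      simp [this]
    exact continuousWithinAt_const.congr hcst (hcst x self_mem_Ici)

lemma distortT_eq_comp {d F : ℝ → ℝ} (hd : DFRightCts d) (hF : F ∈ m0Set) :
    distortT d F = d ∘ F :=
  funext fun x => (continuousWithinAt_distort hd hF x).rightLim_eq

lemma comp_mem_m0Set {d F : ℝ → ℝ} (hd : IsDFhat d) (hdr : DFRightCts d) (hF : F ∈ m0Set) :
    d ∘ F ∈ m0Set := by
  obtain ⟨⟨hmono, h0, h1⟩, ht0, ht1⟩ := hd
  refine ⟨fun x y hxy => hmono ⟨m0Set_nonneg hF x, m0Set_le_one hF x⟩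
    ⟨m0Set_nonneg hF y, m0Set_le_one hF y⟩ (hF.1 hxy), continuousWithinAt_distort hdr hF, ?_, ?_⟩
  · have hc : ContinuousWithinAt d (Ici 0) 0 := by
      rw [← continuousWithinAt_Ioi_iff_Ici, ContinuousWithinAt, h0]; exact ht0
    rw [ContinuousWithinAt, h0] at hc
    exact hc.comp (tendsto_nhdsWithin_iff.2 ⟨hF.2.2.1, .of_forall (m0Set_nonneg hF)⟩)
  · have hc : ContinuousWithinAt d (Iic 1) 1 := by
      rw [← continuousWithinAt_Iio_iff_Iic, ContinuousWithinAt, h1]; exact ht1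
    rw [ContinuousWithinAt, h1] at hc
    exact hc.comp (tendsto_nhdsWithin_iff.2 ⟨hF.2.2.2, .of_forall (m0Set_le_one hF)⟩)

/-- Existence of the left `p`-quantile `q`, characterised by its Galois property. -/
lemma exists_quantile {F : ℝ → ℝ} (hF : F ∈ m0Set) {p : ℝ} (hp : p ∈ Ioo (0 : ℝ) 1) :
    ∃ q, ∀ x, p ≤ F x ↔ q ≤ x := by
  have hne : {x | p ≤ F x}.Nonempty := by
    obtain ⟨x, hx⟩ := (hF.2.2.2.eventually (lt_mem_nhds hp.2)).exists
    exact ⟨x, hx.le⟩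
  have hbdd : BddBelow {x | p ≤ F x} := by
    obtain ⟨b, hb⟩ := (hF.2.2.1.eventually (gt_mem_nhds hp.1)).exists
    refine ⟨b, fun x hx => ?_⟩
    by_contra! h
    exact absurd (hF.1 h.le) (not_le.2 (hb.trans_le hx))
  have hmem : p ≤ F (sInf {x | p ≤ F x}) := by
    refine ge_of_tendsto ((hF.2.1 _).mono Ioi_subset_Ici_self) ?_
    filter_upwards [self_mem_nhdsWithin] with y hy
    obtain ⟨z, hz, hzy⟩ := (csInf_lt_iff hbdd hne).1 hy
    exact le_trans hz (hF.1 hzy.le)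
  exact ⟨_, fun x => ⟨fun hx => csInf_le hbdd hx, fun hx => hmem.trans (hF.1 hx)⟩⟩

lemma sublevel_cases {u : ℝ → ℝ} (hu : IsLeftCtsIncr u) (x : ℝ) :
    u ⁻¹' Iic x = ∅ ∨ u ⁻¹' Iic x = univ ∨ ∃ a, u ⁻¹' Iic x = Iic a := by
  by_cases hne : (u ⁻¹' Iic x).Nonempty
  swap
  · exact Or.inl (not_nonempty_iff_eq_empty.1 hne)
  right
  by_cases hbdd : BddAbove (u ⁻¹' Iic x)
  · right
    have hmem : u (sSup (u ⁻¹' Iic x)) ≤ x := by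
      refine le_of_tendsto ((hu.2 _).mono Iio_subset_Iic_self) ?_
      filter_upwards [self_mem_nhdsWithin] with y hy
      obtain ⟨z, hz, hzy⟩ := (lt_csSup_iff hbdd hne).1 hy
      exact (hu.1 hzy.le).trans hz
    refine ⟨sSup (u ⁻¹' Iic x), Subset.antisymm (fun y hy => le_csSup hbdd hy) fun y hy => ?_⟩
    exact (hu.1 hy).trans hmem
  · left
    refine eq_univ_of_forall fun y => ?_
    obtain ⟨z, hz, hyz⟩ := not_bddAbove_iff.1 hbdd y
    exact (hu.1 hyz.le).trans hz

/-- The value of `T^u F` at `x` is `0`, `1` or a value of `F`, in a way depending only on `u`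
and `x`. -/
lemma utilityT_cases {u : ℝ → ℝ} (hu : IsLeftCtsIncr u) (x : ℝ) :
    ((∀ y, ¬ u y ≤ x) ∧ ∀ F ∈ m0Set, utilityT u F x = 0) ∨
    ((∀ y, u y ≤ x) ∧ ∀ F ∈ m0Set, utilityT u F x = 1) ∨
    ∃ a, (∀ y, u y ≤ x ↔ y ≤ a) ∧ ∀ F ∈ m0Set, utilityT u F x = F a := by
  have key : ∀ F, (hF : F ∈ m0Set) → utilityT u F x =
      ((StieltjesFunction.measure ⟨F, hF.1, hF.2.1⟩) (u ⁻¹' Iic x)).toReal := fun F hF => by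
    rw [utilityT, dif_pos ⟨hF.1, hF.2.1⟩, Measure.map_apply hu.1.measurable measurableSet_Iic]
  rcases sublevel_cases hu x with h | h | ⟨a, h⟩
  · refine Or.inl ⟨fun y hy => ?_, fun F hF => by rw [key F hF, h]; simp⟩
    have : y ∈ u ⁻¹' Iic x := hy
    rw [h] at this
    exact this
  · refine Or.inr (Or.inl ⟨fun y => ?_, fun F hF => ?_⟩)
    · have : y ∈ u ⁻¹' Iic x := h ▸ mem_univ y
      exact this
    · rw [key F hF, h, StieltjesFunction.measure_univ _ (l := 0) (u := 1) hF.2.2.1 hF.2.2.2]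
      simp
  · refine Or.inr (Or.inr ⟨a, fun y => Set.ext_iff.1 h y, fun F hF => ?_⟩)
    rw [key F hF, h, StieltjesFunction.measure_Iic _ (l := 0) hF.2.2.1]
    simpa using m0Set_nonneg hF a

/-- The threshold function `1_{[p, ∞)}`: as a distortion function it is `1_{[p, 1]}`, and it is
also the cdf of the point mass at `p`. -/
def threshold (p : ℝ) : ℝ → ℝ := fun t => if p ≤ t then 1 else 0

lemma half_le_threshold {p t : ℝ} : 1 / 2 ≤ threshold p t ↔ p ≤ t := by
  unfold threshold
  split_ifs with h <;> norm_num [h]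

lemma threshold_isDFhat {p : ℝ} (hp : p ∈ Ioo (0 : ℝ) 1) : IsDFhat (threshold p) := by
  refine ⟨⟨?_, by simp [threshold, hp.1], by simp [threshold, hp.2.le]⟩, ?_, ?_⟩
  · intro s _ t _ hst
    unfold threshold
    split_ifs with h1 h2 <;> first | exact absurd (h1.trans hst) h2 | norm_num
  · refine tendsto_const_nhds.congr' ?_
    filter_upwards [nhdsWithin_le_nhds (gt_mem_nhds hp.1)] with t ht
    simp [threshold, ht]
  · refine tendsto_const_nhds.congr' ?_
    filter_upwards [nhdsWithin_le_nhds (lt_mem_nhds hp.2)] with t ht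
    simp [threshold, le_of_lt ht]

lemma threshold_rightCts (p : ℝ) : DFRightCts (threshold p) := by
  intro x _
  refine tendsto_const_nhds.congr' ?_
  by_cases h : p ≤ x
  · filter_upwards [self_mem_nhdsWithin] with t ht
    simp [threshold, h, h.trans (le_of_lt ht)]
  · filter_upwards [nhdsWithin_le_nhds (gt_mem_nhds (not_le.1 h))] with t ht
    simp [threshold, h, ht]

lemma threshold_comp {F : ℝ → ℝ} {p q : ℝ} (hq : ∀ x, p ≤ F x ↔ q ≤ x) :
    threshold p ∘ F = threshold q := by
  funext x
  simp [threshold, hq x]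

lemma sigmoid_mem_m0Set : Real.sigmoid ∈ m0Set :=
  ⟨Real.sigmoid_monotone, fun _ => differentiable_sigmoid.continuous.continuousWithinAt,
    Real.tendsto_sigmoid_atBot, Real.tendsto_sigmoid_atTop⟩

lemma threshold_mem_m0Set (c : ℝ) : threshold c ∈ m0Set := by
  -- A point mass is a threshold distortion of the logistic distribution.
  rw [← threshold_comp (F := Real.sigmoid) (p := Real.sigmoid c) fun x => Real.sigmoid_le_iff]
  exact comp_mem_m0Set (threshold_isDFhat ⟨Real.sigmoid_pos c, Real.sigmoid_lt_one c⟩)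
    (threshold_rightCts _) sigmoid_mem_m0Set

/-- If `u c` is the left median of `T δ_c`, then `T` maps left `p`-quantiles through `u`. -/
lemma le_map_iff {T : (ℝ → ℝ) → ℝ → ℝ} (hT : ∀ F ∈ m0Set, T F ∈ m0Set)
    (hcomm : ∀ d : ℝ → ℝ, IsDFhat d → DFRightCts d → ∀ F ∈ m0Set,
      T (distortT d F) = distortT d (T F))
    {u : ℝ → ℝ} (hu : ∀ c x, 1 / 2 ≤ T (threshold c) x ↔ u c ≤ x)
    {F : ℝ → ℝ} (hF : F ∈ m0Set) {p q : ℝ} (hp : p ∈ Ioo (0 : ℝ) 1)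
    (hq : ∀ x, p ≤ F x ↔ q ≤ x) (x : ℝ) : p ≤ T F x ↔ u q ≤ x := by
  have h := hcomm _ (threshold_isDFhat hp) (threshold_rightCts p) F hF
  rw [distortT_eq_comp (threshold_rightCts p) hF,
    distortT_eq_comp (threshold_rightCts p) (hT F hF), threshold_comp hq] at h
  rw [← hu, h]
  exact half_le_threshold.symm

lemma eq_of_forall_le_iff_Ioo {r s : ℝ} (hr : r ∈ Icc (0 : ℝ) 1) (hs : s ∈ Icc (0 : ℝ) 1)
    (h : ∀ p ∈ Ioo (0 : ℝ) 1, p ≤ r ↔ p ≤ s) : r = s := by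
  have aux : ∀ {r s : ℝ}, r ∈ Icc (0 : ℝ) 1 → s ∈ Icc (0 : ℝ) 1 →
      (∀ p ∈ Ioo (0 : ℝ) 1, p ≤ r → p ≤ s) → r ≤ s := by
    intro r s hr hs h
    by_contra! hlt
    obtain ⟨p, hsp, hpr⟩ := exists_between hlt
    exact (h p ⟨hs.1.trans_lt hsp, hpr.trans_le hr.2⟩ hpr.le).not_gt hsp
  exact le_antisymm (aux hr hs fun p hp => (h p hp).1) (aux hs hr fun p hp => (h p hp).2)

/-- A map `T : M₀ → M₀` commutes with the probability distortion `T_d` for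
every right-continuous distortion function `d` with `d(0+) = 0` and `d(1-) = 1`
if and only if `T = T^u` for some increasing left-continuous `u : ℝ → ℝ`. -/
theorem stmt11 (T : (ℝ → ℝ) → ℝ → ℝ) (hT : ∀ F ∈ m0Set, T F ∈ m0Set) :
    (∀ d : ℝ → ℝ, IsDFhat d → DFRightCts d → ∀ F ∈ m0Set,
        T (distortT d F) = distortT d (T F)) ↔
      ∃ u : ℝ → ℝ, IsLeftCtsIncr u ∧ ∀ F ∈ m0Set, T F = utilityT u F := by
  constructor
  · intro hcomm
    choose u hu using fun c =>
      exists_quantile (hT _ (threshold_mem_m0Set c)) (p := 1 / 2) ⟨by norm_num, by norm_num⟩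
    -- The logistic cdf has every real `q` as a quantile, at level `sigmoid q`.
    have hsig : ∀ q x, Real.sigmoid q ≤ T Real.sigmoid x ↔ u q ≤ x := fun q =>
      le_map_iff hT hcomm hu sigmoid_mem_m0Set ⟨Real.sigmoid_pos q, Real.sigmoid_lt_one q⟩
        fun x => Real.sigmoid_le_iff
    have hmono : Monotone u := fun a b hab =>
      (hsig a (u b)).1 ((Real.sigmoid_le hab).trans ((hsig b (u b)).2 le_rfl))
    have huL : IsLeftCtsIncr u := by
      refine ⟨hmono, fun q => tendsto_order.2 ⟨fun l hl => ?_, fun r hr => ?_⟩⟩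
      · have hlt : T Real.sigmoid l < Real.sigmoid q := by
          rw [← not_le, hsig, not_le]; exact hl
        have hcts : ContinuousAt Real.sigmoid q := differentiable_sigmoid.continuous.continuousAt
        filter_upwards [nhdsWithin_le_nhds (hcts.eventually (lt_mem_nhds hlt))] with y hy
        rwa [← not_le, hsig, not_le] at hy
      · filter_upwards [self_mem_nhdsWithin] with y hy
        exact (hmono hy).trans_lt hr
    refine ⟨u, huL, fun F hF => funext fun x => ?_⟩
    have hr : T F x ∈ Icc (0 : ℝ) 1 := ⟨m0Set_nonneg (hT F hF) x, m0Set_le_one (hT F hF) x⟩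
    rcases utilityT_cases huL x with ⟨h, hv⟩ | ⟨h, hv⟩ | ⟨a, h, hv⟩ <;> rw [hv F hF]
    · refine eq_of_forall_le_iff_Ioo hr (by simp) fun p hp => ?_
      obtain ⟨q, hq⟩ := exists_quantile hF hp
      rw [le_map_iff hT hcomm hu hF hp hq]
      exact iff_of_false (h q) (not_le.2 hp.1)
    · refine eq_of_forall_le_iff_Ioo hr (by simp) fun p hp => ?_
      obtain ⟨q, hq⟩ := exists_quantile hF hp
      rw [le_map_iff hT hcomm hu hF hp hq]
      exact iff_of_true (h q) hp.2.le
    · refine eq_of_forall_le_iff_Ioo hr ⟨m0Set_nonneg hF a, m0Set_le_one hF a⟩ fun p hp => ?_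
      obtain ⟨q, hq⟩ := exists_quantile hF hp
      rw [le_map_iff hT hcomm hu hF hp hq, h, hq]
  · rintro ⟨u, hu, hTu⟩ d hd hdr F hF
    have hdF := comp_mem_m0Set hd hdr hF
    rw [distortT_eq_comp hdr hF, distortT_eq_comp hdr (hT F hF), hTu _ hdF, hTu _ hF]
    funext x
    rcases utilityT_cases hu x with ⟨-, hv⟩ | ⟨-, hv⟩ | ⟨a, -, hv⟩
    · simp [hv _ hdF, hv _ hF, hd.1.2.1]
    · simp [hv _ hdF, hv _ hF, hd.1.2.2]
    · simp [hv _ hdF, hv _ hF]
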